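/- arXiv:1804.01742 — 2 statements merged into one kernel-verified Lean document; each statement's English description precedes it below -/
import Mathlib

section
/- Suppose that for i = 1,2 there exist positive real numbers ρᵢ and sᵢ with ρᵢ < cᵢ·sᵢ such that: (i) g₁(t,w₁,w₂,z₁,z₂) < m₁ρ₁ for all t ∈ [0,1], w₁ ∈ [0,ρ₁], w₂ ∈ [0,ρ₂], z₁,z₂ ≥ 0, and g₂(t,w₁,w₂,z₁,z₂) < m₂ρ₂ on the same set; (ii) g₁(t,w₁,w₂,z₁,z₂) > M₁s₁ for all t ∈ [a₁,b₁], w₁ ∈ [s₁, s₁/c₁], w₂ ∈ [0, s₂/c₂], z₁,z₂ ≥ 0, and g₂(t,w₁,w₂,z₁,z₂) > M₂s₂ for all t ∈ [a₂,b₂], w₁ ∈ [0, s₁/c₁], w₂ ∈ [s₂, s₂/c₂], z₁,z₂ ≥ 0. Then there exist functions u,v : [0,1] → [0,∞), continuous on [0,1] and twice continuously differentiable on (0,1), not both identically zero, such that −u''(t) = g₁(t,u(t),v(t),|u'(t)|,|v'(t)|) and −v''(t) = g₂(t,u(t),v(t),|u'(t)|,|v'(t)|) for all t ∈ (0,1),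 with boundary conditions u(0) = u(1) = 0, v(0) = 0 and v'(1) = 0 (v being continuously differentiable at t = 1 from the left), and moreover min_{t∈[a₁,b₁]} u(t) ≥ c₁·sup_{t∈[0,1]} u(t) and min_{t∈[a₂,b₂]} v(t) ≥ c₂·sup_{t∈[0,1]} v(t). -/
/-!
For a merely continuous right-hand side the state at time `1` is not a function of the initial
state, so shooting is done on Tonelli's delayed system `y' t = f t (y (t - h))`, whose solutions are
unique and depend continuously on their initial values. Truncating `g₁`, `g₂` outside `0 ≤ u ≤ ρ₁`,
`0 ≤ v ≤ ρ₂` gives sources with values in `[0, K₁]` and `[0, K₂]`, where `K₁ = 8 ρ₁`, `K₂ = 2 ρ₂`.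
Then `u 1` and `v' 1`, as functions of `(u' 0, v' 0) ∈ [0, K₁] × [0, K₂]`, have weakly opposite
signs on opposite edges, and the Poincaré–Miranda theorem yields a solution of the delayed boundary
value problem. By Ascoli's theorem these converge along a sequence `h → 0` to a solution of the
truncated problem.

Comparison with the parabolas `4 ρ₁ t (1 - t)` and `ρ₂ t (2 - t)` gives `u ≤ ρ₁` and `v ≤ ρ₂`, so
the truncation is inactive. Concavity of `u` and `v` gives the Harnack-type inequalities, and
`(u, v) = 0` would force `gᵢ t 0 0 0 0 = 0` for all `t`.
-/

/-- `IsPosSol a₁ b₁ a₂ b₂ c₁ c₂ g₁ g₂ u v` says that `(u,v)` is a positive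
solution, lying in the cone determined by `[a₁,b₁]`, `c₁` and `[a₂,b₂]`, `c₂`,
of the system
`−u'' = g₁(t,u,v,|u'|,|v'|)`, `−v'' = g₂(t,u,v,|u'|,|v'|)` on `(0,1)` with
boundary conditions `u(0) = u(1) = v(0) = v'(1) = 0` (the last derivative taken
from the left at `t = 1`):  `u, v` are nonnegative, continuous on `[0,1]`,
twice continuously differentiable on `(0,1)`, not both identically zero, and
satisfy the Harnack-type inequalities
`min_{[a₁,b₁]} u ≥ c₁·sup_{[0,1]} u` and `min_{[a₂,b₂]} v ≥ c₂·sup_{[0,1]} v`. -/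
def IsPosSol (a₁ b₁ a₂ b₂ c₁ c₂ : ℝ) (g₁ g₂ : ℝ → ℝ → ℝ → ℝ → ℝ → ℝ)
    (u v : ℝ → ℝ) : Prop :=
  (∀ t ∈ Set.Icc (0:ℝ) 1, 0 ≤ u t) ∧ (∀ t ∈ Set.Icc (0:ℝ) 1, 0 ≤ v t) ∧
  ContinuousOn u (Set.Icc 0 1) ∧ ContinuousOn v (Set.Icc 0 1) ∧
  ContDiffOn ℝ 2 u (Set.Ioo 0 1) ∧ ContDiffOn ℝ 2 v (Set.Ioo 0 1) ∧
  ¬ ((∀ t ∈ Set.Icc (0:ℝ) 1, u t = 0) ∧ (∀ t ∈ Set.Icc (0:ℝ) 1, v t = 0)) ∧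
  (∀ t ∈ Set.Ioo (0:ℝ) 1,
    -(deriv (deriv u) t) = g₁ t (u t) (v t) |deriv u t| |deriv v t|) ∧
  (∀ t ∈ Set.Ioo (0:ℝ) 1,
    -(deriv (deriv v) t) = g₂ t (u t) (v t) |deriv u t| |deriv v t|) ∧
  u 0 = 0 ∧ u 1 = 0 ∧ v 0 = 0 ∧ HasDerivWithinAt v 0 (Set.Iic 1) 1 ∧
  c₁ * sSup (u '' Set.Icc (0:ℝ) 1) ≤ sInf (u '' Set.Icc a₁ b₁) ∧
  c₂ * sSup (v '' Set.Icc (0:ℝ) 1) ≤ sInf (v '' Set.Icc a₂ b₂)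

open Set Filter Topology

open Real in
theorem exists_int_abs_sub_le_of_cos_nonneg {X : Type*} [TopologicalSpace X] {S : Set X}
    (hS : IsPreconnected S) {θ : X → ℝ} (hθ : ContinuousOn θ S) (hcos : ∀ x ∈ S, 0 ≤ cos (θ x)) :
    ∃ k : ℤ, ∀ x ∈ S, |θ x - k * (2 * π)| ≤ π / 2 := by
  obtain rfl | ⟨x₀, hx₀⟩ := S.eq_empty_or_nonempty
  · simp
  set k : ℤ := round (θ x₀ / (2 * π))
  set ψ : X → ℝ := fun x ↦ |θ x - k * (2 * π)| with hψ
  have hψ_cont : ContinuousOn ψ S := (hθ.sub continuousOn_const).abs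
  have hψ_gap : ∀ x ∈ S, ψ x ≤ π → ψ x ≤ π / 2 := by
    intro x hx hle
    by_contra! hlt
    have hneg : cos (ψ x) < 0 := cos_neg_of_pi_div_two_lt_of_lt hlt (by linarith [pi_pos])
    rw [hψ, cos_abs, cos_sub_int_mul_two_pi] at hneg
    exact (hcos x hx).not_gt hneg
  have hx₀_le : ψ x₀ ≤ π := by
    have hround := abs_sub_round (θ x₀ / (2 * π))
    have hscale : θ x₀ - k * (2 * π) = (θ x₀ / (2 * π) - k) * (2 * π) := by
      field_simp [pi_ne_zero]
    calc ψ x₀ = |θ x₀ / (2 * π) - k| * (2 * π) := by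
          rw [hψ, ← abs_of_pos two_pi_pos, ← abs_mul, abs_of_pos two_pi_pos, ← hscale]
      _ ≤ 1 / 2 * (2 * π) := by gcongr
      _ = π := by ring
  refine ⟨k, fun x hx ↦ ?_⟩
  by_contra! hlt
  obtain ⟨y, hy, hψy⟩ : min (ψ x) π ∈ ψ '' S :=
    hS.intermediate_value hx₀ hx hψ_cont
      ⟨le_min ((hψ_gap x₀ hx₀ hx₀_le).trans hlt.le) hx₀_le, min_le_left _ _⟩
  have hmin : π / 2 < min (ψ x) π := lt_min hlt (by linarith [pi_pos])
  exact (hψ_gap y hy (hψy.trans_le (min_le_right _ _))).not_gt (hψy ▸ hmin)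

theorem exists_continuousOn_angle_of_rectangle {a₁ b₁ a₂ b₂ : ℝ} (h₁ : a₁ ≤ b₁) (h₂ : a₂ ≤ b₂)
    {F : ℝ × ℝ → ℂ} (hF : ContinuousOn F (Icc a₁ b₁ ×ˢ Icc a₂ b₂))
    (hF₀ : ∀ z ∈ Icc a₁ b₁ ×ˢ Icc a₂ b₂, F z ≠ 0) :
    ∃ θ : ℝ × ℝ → ℝ, ContinuousOn θ (Icc a₁ b₁ ×ˢ Icc a₂ b₂) ∧
      ∀ z ∈ Icc a₁ b₁ ×ˢ Icc a₂ b₂,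
        (F z).re = ‖F z‖ * Real.cos (θ z) ∧ (F z).im = ‖F z‖ * Real.sin (θ z) := by
  let r : ℝ × ℝ → ℝ × ℝ := fun z ↦ (projIcc a₁ b₁ h₁ z.1, projIcc a₂ b₂ h₂ z.2)
  have hr_mem : ∀ z, r z ∈ Icc a₁ b₁ ×ˢ Icc a₂ b₂ := fun z ↦
    ⟨(projIcc a₁ b₁ h₁ z.1).2, (projIcc a₂ b₂ h₂ z.2).2⟩
  have hr_eq : ∀ z ∈ Icc a₁ b₁ ×ˢ Icc a₂ b₂, r z = z := fun z hz ↦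
    Prod.ext (congrArg Subtype.val (projIcc_of_mem h₁ hz.1))
      (congrArg Subtype.val (projIcc_of_mem h₂ hz.2))
  have hr : Continuous r := by fun_prop
  have hsc : IsSimplyConnected (univ : Set (ℝ × ℝ)) :=
    have := convex_univ (𝕜 := ℝ) (E := ℝ × ℝ) |>.contractibleSpace univ_nonempty
    SimplyConnectedSpace.ofContractible _
  obtain ⟨L, hL, hexp⟩ := Complex.exists_continuousOn_eqOn_exp_comp
    (U := (univ : Set (ℝ × ℝ))) hsc isOpen_univ
    (hF.comp hr.continuousOn fun z _ ↦ hr_mem z) (by simpa using fun x y ↦ hF₀ _ (hr_mem (x, y)))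
  refine ⟨fun z ↦ (L z).im, (Complex.continuous_im.comp_continuousOn hL).mono (subset_univ _),
    fun z hz ↦ ?_⟩
  have hFz : Complex.exp (L z) = F z := by simpa [hr_eq z hz] using hexp (mem_univ z)
  rw [← hFz, Complex.norm_exp, Complex.exp_re, Complex.exp_im]
  exact ⟨rfl, rfl⟩

-- Along the right, top, left and bottom edges the angle stays within `π / 2` of `0`, `π / 2`, `π`
-- and `π + π / 2` modulo `2 * π`; comparing branches at the corners, it would wind around once.
open Real in
theorem not_continuousOn_angle_of_sign_on_edges {a₁ b₁ a₂ b₂ : ℝ} (h₁ : a₁ ≤ b₁) (h₂ : a₂ ≤ b₂)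
    {θ : ℝ × ℝ → ℝ} (hleft : ∀ y ∈ Icc a₂ b₂, cos (θ (a₁, y)) ≤ 0)
    (hright : ∀ y ∈ Icc a₂ b₂, 0 ≤ cos (θ (b₁, y)))
    (hbottom : ∀ x ∈ Icc a₁ b₁, sin (θ (x, a₂)) ≤ 0)
    (htop : ∀ x ∈ Icc a₁ b₁, 0 ≤ sin (θ (x, b₂))) :
    ¬ ContinuousOn θ (Icc a₁ b₁ ×ˢ Icc a₂ b₂) := by
  intro hθ
  have hhor : ∀ y ∈ Icc a₂ b₂, ContinuousOn (fun x ↦ θ (x, y)) (Icc a₁ b₁) := fun y hy ↦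
    hθ.comp (by fun_prop) fun x hx ↦ ⟨hx, hy⟩
  have hver : ∀ x ∈ Icc a₁ b₁, ContinuousOn (fun y ↦ θ (x, y)) (Icc a₂ b₂) := fun x hx ↦
    hθ.comp (by fun_prop) fun y hy ↦ ⟨hx, hy⟩
  have ha₁ := left_mem_Icc.2 h₁
  have hb₁ := right_mem_Icc.2 h₁
  have ha₂ := left_mem_Icc.2 h₂
  have hb₂ := right_mem_Icc.2 h₂
  obtain ⟨j, hj⟩ := exists_int_abs_sub_le_of_cos_nonneg isPreconnected_Icc (hver b₁ hb₁) hright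
  obtain ⟨k, hk⟩ := exists_int_abs_sub_le_of_cos_nonneg (θ := fun x ↦ θ (x, b₂) - π / 2)
    isPreconnected_Icc ((hhor b₂ hb₂).sub continuousOn_const)
    fun x hx ↦ by simpa [cos_sub_pi_div_two] using htop x hx
  obtain ⟨l, hl⟩ := exists_int_abs_sub_le_of_cos_nonneg (θ := fun y ↦ θ (a₁, y) - π)
    isPreconnected_Icc ((hver a₁ ha₁).sub continuousOn_const)
    fun y hy ↦ by simpa [cos_sub_pi] using hleft y hy
  obtain ⟨m, hm⟩ := exists_int_abs_sub_le_of_cos_nonneg (θ := fun x ↦ θ (x, a₂) - (π + π / 2))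
    isPreconnected_Icc ((hhor a₂ ha₂).sub continuousOn_const)
    fun x hx ↦ by simpa [← sub_sub, cos_sub_pi_div_two, sin_sub_pi] using hbottom x hx
  have hcorner : ∀ {i i' : ℤ}, (i : ℝ) * (2 * π) < (i' + 1) * (2 * π) → i ≤ i' := by
    intro i i' h
    exact Int.lt_add_one_iff.1 (by exact_mod_cast lt_of_mul_lt_mul_right h two_pi_pos.le)
  have hjk : j ≤ k := hcorner (by
    linarith [pi_pos, abs_le.1 (hj b₂ hb₂), abs_le.1 (hk b₁ hb₁)])
  have hkl : k ≤ l := hcorner (by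
    linarith [pi_pos, abs_le.1 (hk a₁ ha₁), abs_le.1 (hl b₂ hb₂)])
  have hlm : l ≤ m := hcorner (by
    linarith [pi_pos, abs_le.1 (hl a₂ ha₂), abs_le.1 (hm a₁ ha₁)])
  have hmj : m + 1 ≤ j := hcorner (by
    push_cast
    linarith [pi_pos, abs_le.1 (hm b₁ hb₁), abs_le.1 (hj a₂ ha₂)])
  lia

theorem poincare_miranda {a₁ b₁ a₂ b₂ : ℝ} (h₁ : a₁ ≤ b₁) (h₂ : a₂ ≤ b₂)
    {f g : ℝ × ℝ → ℝ} (hf : ContinuousOn f (Icc a₁ b₁ ×ˢ Icc a₂ b₂))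
    (hg : ContinuousOn g (Icc a₁ b₁ ×ˢ Icc a₂ b₂))
    (hleft : ∀ y ∈ Icc a₂ b₂, f (a₁, y) ≤ 0) (hright : ∀ y ∈ Icc a₂ b₂, 0 ≤ f (b₁, y))
    (hbottom : ∀ x ∈ Icc a₁ b₁, g (x, a₂) ≤ 0) (htop : ∀ x ∈ Icc a₁ b₁, 0 ≤ g (x, b₂)) :
    ∃ z ∈ Icc a₁ b₁ ×ˢ Icc a₂ b₂, f z = 0 ∧ g z = 0 := by
  by_contra! hne
  let F : ℝ × ℝ → ℂ := fun z ↦ ⟨f z, g z⟩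
  have hF : ContinuousOn F (Icc a₁ b₁ ×ˢ Icc a₂ b₂) :=
    Complex.equivRealProdCLM.symm.continuous.comp_continuousOn (hf.prodMk hg)
  have hF₀ : ∀ z ∈ Icc a₁ b₁ ×ˢ Icc a₂ b₂, F z ≠ 0 := fun z hz h ↦
    hne z hz (congrArg Complex.re h) (congrArg Complex.im h)
  obtain ⟨θ, hθ, hpolar⟩ := exists_continuousOn_angle_of_rectangle h₁ h₂ hF hF₀
  have hnorm : ∀ z ∈ Icc a₁ b₁ ×ˢ Icc a₂ b₂, 0 < ‖F z‖ := fun z hz ↦ norm_pos_iff.2 (hF₀ z hz)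
  refine not_continuousOn_angle_of_sign_on_edges h₁ h₂ (fun y hy ↦ ?_) (fun y hy ↦ ?_)
    (fun x hx ↦ ?_) (fun x hx ↦ ?_) hθ
  · have hz : (a₁, y) ∈ Icc a₁ b₁ ×ˢ Icc a₂ b₂ := ⟨left_mem_Icc.2 h₁, hy⟩
    exact nonpos_of_mul_nonpos_right ((hpolar _ hz).1.symm.trans_le (hleft y hy)) (hnorm _ hz)
  · have hz : (b₁, y) ∈ Icc a₁ b₁ ×ˢ Icc a₂ b₂ := ⟨right_mem_Icc.2 h₁, hy⟩
    exact nonneg_of_mul_nonneg_right ((hright y hy).trans_eq (hpolar _ hz).1) (hnorm _ hz)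
  · have hz : (x, a₂) ∈ Icc a₁ b₁ ×ˢ Icc a₂ b₂ := ⟨hx, left_mem_Icc.2 h₂⟩
    exact nonpos_of_mul_nonpos_right ((hpolar _ hz).2.symm.trans_le (hbottom x hx)) (hnorm _ hz)
  · have hz : (x, b₂) ∈ Icc a₁ b₁ ×ˢ Icc a₂ b₂ := ⟨hx, right_mem_Icc.2 h₂⟩
    exact nonneg_of_mul_nonneg_right ((htop x hx).trans_eq (hpolar _ hz).2) (hnorm _ hz)

theorem exists_subseq_tendstoUniformlyOn {α β : Type*} [TopologicalSpace α] [MetricSpace β]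
    {s : Set α} {K : Set β} (hs : IsCompact s) (hK : IsCompact K) {y : ℕ → α → β}
    (hy : EquicontinuousOn y s) (hyK : ∀ n, MapsTo (y n) s K) :
    ∃ (z : α → β) (φ : ℕ → ℕ), StrictMono φ ∧
      TendstoUniformlyOn (fun n ↦ y (φ n)) z atTop s := by
  have : CompactSpace s := isCompact_iff_compactSpace.1 hs
  let Y : ℕ → BoundedContinuousFunction s β := fun n ↦
    .mkOfCompact ⟨s.domRestrict (y n), (hy.continuousOn n).domRestrict⟩
  have hYK : ∀ (F : BoundedContinuousFunction s β) (x : s), F ∈ range Y → F x ∈ K := by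
    rintro _ x ⟨n, rfl⟩
    exact hyK n x.2
  have hY : Equicontinuous ((↑) : range Y → s → β) := by
    intro x U hU
    filter_upwards [(equicontinuous_restrict_iff y).2 hy x U hU] with x' hx'
    rintro ⟨_, n, rfl⟩
    exact hx' n
  obtain ⟨Z, -, φ, hφ, hZ⟩ :=
    (BoundedContinuousFunction.arzela_ascoli K hK (range Y) hYK hY).tendsto_subseq
      fun n ↦ subset_closure (mem_range_self n)
  refine ⟨Function.extend Subtype.val Z (y 0), φ, hφ, ?_⟩
  rw [tendstoUniformlyOn_iff_tendstoUniformly_comp_coe]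
  convert! BoundedContinuousFunction.tendsto_iff_tendstoUniformly.1 hZ
  ext x
  exact Subtype.val_injective.extend_apply _ _ _

section DelayedODE

variable {E : Type*} [NormedAddCommGroup E] [NormedSpace ℝ E] {f : ℝ → E → E} {h T : ℝ}

/-- `y` solves on `[0, T]` the differential equation `y' = f t y` with its argument delayed by `h`
and the history before time `0` frozen at `y 0`. -/
def IsDelayedSolution (f : ℝ → E → E) (h T : ℝ) (y : ℝ → E) : Prop :=
  ∀ t ∈ Icc 0 T, HasDerivWithinAt y (f t (y (max (t - h) 0))) (Icc 0 T) t

/-- The Picard iterates, started at the constant `x`, of the initial value problem `y 0 = x` for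
the equation delayed by `h`. -/
noncomputable def delayedPicard (f : ℝ → E → E) (h : ℝ) : ℕ → E → ℝ → E
  | 0, x, _ => x
  | k + 1, x, t => x + ∫ s in (0 : ℝ)..t, f s (delayedPicard f h k x (max (s - h) 0))

theorem continuous_delayedPicard (hf : Continuous (Function.uncurry f)) (h : ℝ) :
    ∀ k, Continuous (Function.uncurry (delayedPicard f h k))
  | 0 => continuous_fst
  | k + 1 => by
    have hk := continuous_delayedPicard hf h k
    have hint : Continuous (Function.uncurry fun (x : E) (s : ℝ) ↦
        f s (delayedPicard f h k x (max (s - h) 0))) :=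
      hf.comp (continuous_snd.prodMk (hk.comp (by fun_prop :
        Continuous fun p : E × ℝ ↦ (p.1, max (p.2 - h) 0))))
    exact continuous_fst.add
      (intervalIntegral.continuous_parametric_primitive_of_continuous hint)

-- On `[0, k * h]` the `k + 1`-st iterate only sees the `k`-th one on `[0, (k - 1) * h]`.
theorem delayedPicard_succ_eq (f : ℝ → E → E) (hh : 0 ≤ h) (x : E) :
    ∀ (k : ℕ), ∀ t ∈ Icc 0 (k * h), delayedPicard f h (k + 1) x t = delayedPicard f h k x t
  | 0, t, ht => by
    obtain rfl : t = 0 := by simpa using ht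
    simp [delayedPicard]
  | k + 1, t, ht => by
    rw [delayedPicard, delayedPicard]
    congr 1
    refine intervalIntegral.integral_congr fun s hs ↦ ?_
    rw [uIcc_of_le ht.1] at hs
    have ht' : t ≤ k * h + h := by simpa [add_mul] using ht.2
    have hmem : max (s - h) 0 ∈ Icc 0 (k * h) :=
      ⟨le_max_right _ _, max_le (by linarith [hs.2]) (by positivity)⟩
    exact congrArg (f s) (delayedPicard_succ_eq f hh x k _ hmem)

theorem exists_continuous_isDelayedSolution [CompleteSpace E]
    (hf : Continuous (Function.uncurry f)) (hh : 0 < h) (T : ℝ) :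
    ∃ Y : E → ℝ → E, Continuous (Function.uncurry Y) ∧
      ∀ x, Y x 0 = x ∧ IsDelayedSolution f h T (Y x) := by
  obtain ⟨k, hk⟩ := exists_nat_ge (T / h)
  have hT : T ≤ k * h := (div_le_iff₀ hh).1 hk
  refine ⟨delayedPicard f h (k + 1), continuous_delayedPicard hf h _, fun x ↦
    ⟨by simp [delayedPicard], fun t ht ↦ ?_⟩⟩
  have hmem : max (t - h) 0 ∈ Icc 0 (k * h) :=
    ⟨le_max_right _ _, max_le (by linarith [ht.2]) (by positivity)⟩
  have hint : Continuous fun s ↦ f s (delayedPicard f h k x (max (s - h) 0)) :=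
    hf.comp (continuous_id.prodMk ((continuous_delayedPicard hf h k).comp (by fun_prop :
      Continuous fun s : ℝ ↦ (x, max (s - h) 0))))
  rw [delayedPicard_succ_eq f hh.le x k _ hmem]
  exact ((hint.integral_hasStrictDerivAt 0 t).hasDerivAt.const_add x).hasDerivWithinAt

variable {y : ℝ → E}

theorem max_sub_zero_mem_Icc {t : ℝ} (hh : 0 ≤ h) (ht : t ∈ Icc 0 T) :
    max (t - h) 0 ∈ Icc 0 T :=
  ⟨le_max_right _ _, max_le (by linarith [ht.2]) (ht.1.trans ht.2)⟩

theorem IsDelayedSolution.continuousOn (hy : IsDelayedSolution f h T y) :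
    ContinuousOn y (Icc 0 T) :=
  HasDerivWithinAt.continuousOn hy

theorem IsDelayedSolution.continuousOn_deriv (hy : IsDelayedSolution f h T y)
    (hf : Continuous (Function.uncurry f)) (hh : 0 ≤ h) :
    ContinuousOn (fun t ↦ f t (y (max (t - h) 0))) (Icc 0 T) :=
  hf.comp_continuousOn (continuousOn_id.prodMk
    (hy.continuousOn.comp (by fun_prop) fun _ ↦ max_sub_zero_mem_Icc hh))

theorem IsDelayedSolution.eq_add_integral [CompleteSpace E] (hy : IsDelayedSolution f h T y)
    (hf : Continuous (Function.uncurry f)) (hh : 0 ≤ h) {t : ℝ} (ht : t ∈ Icc 0 T) :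
    y t = y 0 + ∫ s in (0 : ℝ)..t, f s (y (max (s - h) 0)) := by
  have hsub : Icc 0 t ⊆ Icc 0 T := Icc_subset_Icc_right ht.2
  rw [intervalIntegral.integral_eq_sub_of_hasDerivAt_of_le ht.1 (hy.continuousOn.mono hsub)
    (fun s hs ↦ (hy s (hsub (Ioo_subset_Icc_self hs))).hasDerivAt
      (Icc_mem_nhds hs.1 (hs.2.trans_le ht.2)))
    (((hy.continuousOn_deriv hf hh).mono hsub).intervalIntegrable_of_Icc ht.1),
    add_sub_cancel]

theorem isIntegralCurveOn_of_tendstoUniformlyOn [CompleteSpace E]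
    (hf : Continuous (Function.uncurry f)) {C : ℝ} {δ : ℕ → ℝ} (hδ₀ : ∀ n, 0 ≤ δ n)
    (hδ : Tendsto δ atTop (𝓝 0)) {y : ℕ → ℝ → E} {z : ℝ → E}
    (hy : ∀ n, IsDelayedSolution f (δ n) T (y n))
    (hC : ∀ n, ∀ t ∈ Icc 0 T, ‖f t (y n (max (t - δ n) 0))‖ ≤ C)
    (hyz : TendstoUniformlyOn y z atTop (Icc 0 T)) : IsIntegralCurveOn z f (Icc 0 T) := by
  have hz : ContinuousOn z (Icc 0 T) := hyz.continuousOn (.of_forall fun n ↦ (hy n).continuousOn)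
  have hdelay : ∀ t ∈ Icc 0 T, Tendsto (fun n ↦ max (t - δ n) 0) atTop (𝓝[Icc 0 T] t) := by
    intro t ht
    refine tendsto_nhdsWithin_iff.2 ⟨?_, .of_forall fun n ↦ max_sub_zero_mem_Icc (hδ₀ _) ht⟩
    simpa [max_eq_left ht.1] using
      ((tendsto_const_nhds (x := t)).sub hδ).max (tendsto_const_nhds (x := 0))
  have hf_lim : ∀ t ∈ Icc 0 T,
      Tendsto (fun n ↦ f t (y n (max (t - δ n) 0))) atTop (𝓝 (f t (z t))) := fun t ht ↦
    (hf.tendsto (t, z t)).comp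
      (tendsto_const_nhds.prodMk_nhds (hyz.tendsto_comp (hz t ht) (hdelay t ht)))
  have hz_eq : ∀ t ∈ Icc 0 T, z t = ODE.picard f 0 (z 0) z t := by
    intro t ht
    have hsub : uIoc 0 t ⊆ Icc 0 T := by
      rw [uIoc_of_le ht.1]
      exact Ioc_subset_Icc_self.trans (Icc_subset_Icc_right ht.2)
    refine tendsto_nhds_unique (hyz.tendsto_at ht) ?_
    simp only [fun n ↦ (hy n).eq_add_integral hf (hδ₀ n) ht]
    refine (hyz.tendsto_at ⟨le_rfl, ht.1.trans ht.2⟩).add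
      (intervalIntegral.tendsto_integral_filter_of_dominated_convergence (fun _ ↦ C)
        (.of_forall fun n ↦ ?_) (.of_forall fun n ↦ .of_forall fun s hs ↦ hC n s (hsub hs))
        intervalIntegrable_const (.of_forall fun s hs ↦ hf_lim s (hsub hs)))
    exact (((hy n).continuousOn_deriv hf (hδ₀ _)).aestronglyMeasurable
      measurableSet_Icc).mono_set hsub
  exact fun t ht ↦ (ODE.hasDerivWithinAt_picard_Icc ⟨le_rfl, ht.1.trans ht.2⟩ hf.continuousOn hz
    (fun _ _ ↦ mem_univ _) (z 0) ht).congr hz_eq (hz_eq t ht)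

theorem exists_subseq_tendsto_isIntegralCurveOn [CompleteSpace E]
    (hf : Continuous (Function.uncurry f)) {K : Set E} (hK : IsCompact K) {δ : ℕ → ℝ}
    (hδ₀ : ∀ n, 0 ≤ δ n) (hδ : Tendsto δ atTop (𝓝 0)) {y : ℕ → ℝ → E}
    (hy : ∀ n, IsDelayedSolution f (δ n) T (y n)) (hyK : ∀ n, MapsTo (y n) (Icc 0 T) K) :
    ∃ (z : ℝ → E) (φ : ℕ → ℕ), StrictMono φ ∧ IsIntegralCurveOn z f (Icc 0 T) ∧
      ∀ t ∈ Icc 0 T, Tendsto (fun n ↦ y (φ n) t) atTop (𝓝 (z t)) := by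
  obtain ⟨C, hC⟩ := (isCompact_Icc (a := 0) (b := T)).prod hK |>.exists_bound_of_continuousOn
    hf.continuousOn
  have hbound : ∀ n, ∀ t ∈ Icc 0 T, ‖f t (y n (max (t - δ n) 0))‖ ≤ C := fun n t ht ↦
    hC (t, _) ⟨ht, hyK n (max_sub_zero_mem_Icc (hδ₀ n) ht)⟩
  have hlip : ∀ n, LipschitzOnWith C.toNNReal (y n) (Icc 0 T) := fun n ↦
    (convex_Icc 0 T).lipschitzOnWith_of_nnnorm_hasDerivWithin_le (hy n)
      fun t ht ↦ NNReal.le_toNNReal_of_coe_le (hbound n t ht)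
  obtain ⟨z, φ, hφ, hunif⟩ := exists_subseq_tendstoUniformlyOn isCompact_Icc hK
    (LipschitzOnWith.uniformEquicontinuousOn y _ hlip).equicontinuousOn hyK
  exact ⟨z, φ, hφ, isIntegralCurveOn_of_tendstoUniformlyOn hf (fun n ↦ hδ₀ (φ n))
    (hδ.comp hφ.tendsto_atTop) (fun n ↦ hy (φ n)) (fun n ↦ hbound (φ n)) hunif,
    fun t ht ↦ hunif.tendsto_at ht⟩

end DelayedODE

theorem mem_Icc_of_hasDerivWithinAt_mem_Icc {φ φ' : ℝ → ℝ} {a b c d t : ℝ}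
    (hφ : ∀ s ∈ Icc a b, HasDerivWithinAt φ (φ' s) (Icc a b) s)
    (hφ' : ∀ s ∈ Icc a b, φ' s ∈ Icc c d) (ht : t ∈ Icc a b) :
    φ t ∈ Icc (φ a + c * (t - a)) (φ a + d * (t - a)) := by
  have ha : a ∈ Icc a b := ⟨le_rfl, ht.1.trans ht.2⟩
  have hat : ∀ s ∈ interior (Icc a b), HasDerivAt φ (φ' s) s := fun s hs ↦
    (hφ s (interior_subset hs)).hasDerivAt (mem_interior_iff_mem_nhds.1 hs)
  have hdiff : DifferentiableOn ℝ φ (interior (Icc a b)) := fun s hs ↦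
    (hat s hs).differentiableAt.differentiableWithinAt
  have hmem : ∀ s ∈ interior (Icc a b), deriv φ s ∈ Icc c d := fun s hs ↦
    (hat s hs).deriv ▸ hφ' s (interior_subset hs)
  have hcont := HasDerivWithinAt.continuousOn hφ
  have hlower := (convex_Icc a b).mul_sub_le_image_sub_of_le_deriv hcont hdiff
    (fun s hs ↦ (hmem s hs).1) a ha t ht ht.1
  have hupper := (convex_Icc a b).image_sub_le_mul_sub_of_deriv_le hcont hdiff
    (fun s hs ↦ (hmem s hs).2) a ha t ht ht.1
  exact ⟨by linarith, by linarith⟩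

theorem mem_Icc_of_delayed_second_order {u p γ : ℝ → ℝ} {h K t : ℝ} (hh : 0 ≤ h)
    (hu : ∀ s ∈ Icc (0 : ℝ) 1, HasDerivWithinAt u (p (max (s - h) 0)) (Icc 0 1) s)
    (hp : ∀ s ∈ Icc (0 : ℝ) 1, HasDerivWithinAt p (-γ s) (Icc 0 1) s)
    (hγ : ∀ s ∈ Icc (0 : ℝ) 1, γ s ∈ Icc 0 K) (ht : t ∈ Icc (0 : ℝ) 1) :
    u t ∈ Icc (u 0 + (p 0 - K) * t) (u 0 + p 0 * t) ∧ p t ∈ Icc (p 0 - K * t) (p 0) := by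
  have hp_mem : ∀ s ∈ Icc (0 : ℝ) 1, p s ∈ Icc (p 0 - K * s) (p 0) := fun s hs ↦ by
    simpa [← sub_eq_add_neg] using mem_Icc_of_hasDerivWithinAt_mem_Icc hp
      (fun r hr ↦ (⟨neg_le_neg (hγ r hr).2, neg_nonpos.2 (hγ r hr).1⟩ : -γ r ∈ Icc (-K) 0)) hs
  have hK : 0 ≤ K := (hγ t ht).1.trans (hγ t ht).2
  refine ⟨?_, hp_mem t ht⟩
  simpa using mem_Icc_of_hasDerivWithinAt_mem_Icc hu (fun s hs ↦
    have hmem := max_sub_zero_mem_Icc hh hs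
    Icc_subset_Icc_left (sub_le_sub_left (mul_le_of_le_one_right hK hmem.2) _) (hp_mem _ hmem)) ht

section Shooting

variable {G₁ G₂ : ℝ × ℝ × ℝ × ℝ × ℝ → ℝ} {K₁ K₂ h : ℝ} {y : ℝ → ℝ × ℝ × ℝ × ℝ}

/-- The first-order vector field of the system `-u'' = G₁ (t, u, v, u', v')`,
`-v'' = G₂ (t, u, v, u', v')` in the phase coordinates `(u, v, u', v')`. -/
def phaseField (G₁ G₂ : ℝ × ℝ × ℝ × ℝ × ℝ → ℝ) (t : ℝ) (x : ℝ × ℝ × ℝ × ℝ) : ℝ × ℝ × ℝ × ℝ :=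
  (x.2.2.1, x.2.2.2, -G₁ (t, x), -G₂ (t, x))

theorem continuous_phaseField (hG₁ : Continuous G₁) (hG₂ : Continuous G₂) :
    Continuous (Function.uncurry (phaseField G₁ G₂)) := by
  unfold phaseField Function.uncurry
  fun_prop

theorem IsDelayedSolution.phaseField_bounds (hy : IsDelayedSolution (phaseField G₁ G₂) h 1 y)
    (hh : 0 ≤ h) (hK₁ : ∀ x, G₁ x ∈ Icc 0 K₁) (hK₂ : ∀ x, G₂ x ∈ Icc 0 K₂) {t : ℝ}
    (ht : t ∈ Icc (0 : ℝ) 1) :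
    ((y t).1 ∈ Icc ((y 0).1 + ((y 0).2.2.1 - K₁) * t) ((y 0).1 + (y 0).2.2.1 * t) ∧
      (y t).2.2.1 ∈ Icc ((y 0).2.2.1 - K₁ * t) (y 0).2.2.1) ∧
    ((y t).2.1 ∈ Icc ((y 0).2.1 + ((y 0).2.2.2 - K₂) * t) ((y 0).2.1 + (y 0).2.2.2 * t) ∧
      (y t).2.2.2 ∈ Icc ((y 0).2.2.2 - K₂ * t) (y 0).2.2.2) :=
  ⟨mem_Icc_of_delayed_second_order (u := fun t ↦ (y t).1) (p := fun t ↦ (y t).2.2.1) hh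
      (fun s hs ↦ (hy s hs).fst) (fun s hs ↦ (hy s hs).snd.snd.fst) (fun _ _ ↦ hK₁ _) ht,
    mem_Icc_of_delayed_second_order (u := fun t ↦ (y t).2.1) (p := fun t ↦ (y t).2.2.2) hh
      (fun s hs ↦ (hy s hs).snd.fst) (fun s hs ↦ (hy s hs).snd.snd.snd) (fun _ _ ↦ hK₂ _) ht⟩

theorem IsDelayedSolution.phaseField_mapsTo (hy : IsDelayedSolution (phaseField G₁ G₂) h 1 y)
    (hh : 0 ≤ h) (hK₁ : ∀ x, G₁ x ∈ Icc 0 K₁) (hK₂ : ∀ x, G₂ x ∈ Icc 0 K₂)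
    (hy₀ : y 0 ∈ Icc (0, 0, 0, 0) (0, 0, K₁, K₂)) :
    MapsTo y (Icc 0 1) (Icc (-K₁, -K₂, -K₁, -K₂) (K₁, K₂, K₁, K₂)) := by
  intro t ht
  obtain ⟨⟨hu, hp⟩, hv, hq⟩ := hy.phaseField_bounds hh hK₁ hK₂ ht
  obtain ⟨⟨hu₀, hv₀, hp₀, hq₀⟩, hu₀', hv₀', hp₀', hq₀'⟩ := hy₀
  simp only at hu₀ hv₀ hp₀ hq₀ hu₀' hv₀' hp₀' hq₀'
  have hscale : ∀ {c : ℝ}, 0 ≤ c → c * t ∈ Icc 0 c := fun hc ↦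
    ⟨mul_nonneg hc ht.1, mul_le_of_le_one_right hc ht.2⟩
  have hp₀t := hscale hp₀
  have hq₀t := hscale hq₀
  have hK₁t := hscale (hp₀.trans hp₀')
  have hK₂t := hscale (hq₀.trans hq₀')
  rw [sub_mul, mem_Icc] at hu hv
  rw [mem_Icc] at hp hq hp₀t hq₀t hK₁t hK₂t
  refine ⟨⟨?_, ?_, ?_, ?_⟩, ?_, ?_, ?_, ?_⟩ <;> simp only <;> linarith

theorem exists_isDelayedSolution_phaseField_bvp (hG₁ : Continuous G₁) (hG₂ : Continuous G₂)
    (hK₁ : ∀ x, G₁ x ∈ Icc 0 K₁) (hK₂ : ∀ x, G₂ x ∈ Icc 0 K₂) (hh : 0 < h) :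
    ∃ y, IsDelayedSolution (phaseField G₁ G₂) h 1 y ∧ y 0 ∈ Icc (0, 0, 0, 0) (0, 0, K₁, K₂) ∧
      (y 1).1 = 0 ∧ (y 1).2.2.2 = 0 := by
  obtain ⟨Y, hY_cont, hY⟩ :=
    exists_continuous_isDelayedSolution (continuous_phaseField hG₁ hG₂) hh 1
  let start : ℝ × ℝ → ℝ × ℝ × ℝ × ℝ := fun z ↦ (0, 0, z.1, z.2)
  have hend : Continuous fun z ↦ Y (start z) 1 :=
    hY_cont.comp (by fun_prop : Continuous fun z ↦ (start z, (1 : ℝ)))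
  have hbound : ∀ z : ℝ × ℝ, (Y (start z) 1).1 ∈ Icc (z.1 - K₁) z.1 ∧
      (Y (start z) 1).2.2.2 ∈ Icc (z.2 - K₂) z.2 := by
    intro z
    have := (hY (start z)).2.phaseField_bounds hh.le hK₁ hK₂ (right_mem_Icc.2 zero_le_one)
    simp only [(hY (start z)).1, start, zero_add, mul_one] at this
    exact ⟨this.1.1, this.2.2⟩
  have hK₁_nonneg : 0 ≤ K₁ := (hK₁ 0).1.trans (hK₁ 0).2
  have hK₂_nonneg : 0 ≤ K₂ := (hK₂ 0).1.trans (hK₂ 0).2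
  obtain ⟨z, ⟨hz₁, hz₂⟩, hu, hq⟩ := poincare_miranda hK₁_nonneg hK₂_nonneg
    (f := fun z ↦ (Y (start z) 1).1) (g := fun z ↦ (Y (start z) 1).2.2.2)
    hend.fst.continuousOn hend.snd.snd.snd.continuousOn
    (fun b _ ↦ (hbound (0, b)).1.2) (fun b _ ↦ by simpa using (hbound (K₁, b)).1.1)
    (fun a _ ↦ (hbound (a, 0)).2.2) (fun a _ ↦ by simpa using (hbound (a, K₂)).2.1)
  refine ⟨Y (start z), (hY _).2, ?_, hu, hq⟩
  rw [(hY _).1]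
  exact ⟨⟨le_rfl, le_rfl, hz₁.1, hz₂.1⟩, le_rfl, le_rfl, hz₁.2, hz₂.2⟩

theorem exists_isIntegralCurveOn_phaseField_bvp (hG₁ : Continuous G₁) (hG₂ : Continuous G₂)
    (hK₁ : ∀ x, G₁ x ∈ Icc 0 K₁) (hK₂ : ∀ x, G₂ x ∈ Icc 0 K₂) :
    ∃ y, IsIntegralCurveOn y (phaseField G₁ G₂) (Icc 0 1) ∧
      (y 0).1 = 0 ∧ (y 0).2.1 = 0 ∧ (y 1).1 = 0 ∧ (y 1).2.2.2 = 0 := by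
  have hδ : ∀ n : ℕ, (0 : ℝ) < 1 / (n + 1) := fun n ↦ Nat.one_div_pos_of_nat
  choose y hy hy₀ hu₁ hq₁ using fun n ↦
    exists_isDelayedSolution_phaseField_bvp hG₁ hG₂ hK₁ hK₂ (hδ n)
  obtain ⟨z, φ, -, hz, hlim⟩ := exists_subseq_tendsto_isIntegralCurveOn
    (continuous_phaseField hG₁ hG₂) isCompact_Icc (fun n ↦ (hδ n).le)
    tendsto_one_div_add_atTop_nhds_zero_nat hy
    fun n ↦ (hy n).phaseField_mapsTo (hδ n).le hK₁ hK₂ (hy₀ n)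
  have hlim₀ := hlim 0 (left_mem_Icc.2 zero_le_one)
  have hlim₁ := hlim 1 (right_mem_Icc.2 zero_le_one)
  obtain ⟨⟨hu₀, hv₀, -⟩, hu₀', hv₀', -⟩ : z 0 ∈ Icc (0, 0, 0, 0) (0, 0, K₁, K₂) :=
    isClosed_Icc.mem_of_tendsto hlim₀ (.of_forall fun n ↦ hy₀ (φ n))
  refine ⟨z, hz, le_antisymm hu₀' hu₀, le_antisymm hv₀' hv₀, ?_, ?_⟩
  · exact tendsto_nhds_unique hlim₁.fst_nhds (by simp only [hu₁, tendsto_const_nhds])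
  · exact tendsto_nhds_unique hlim₁.snd_nhds.snd_nhds.snd_nhds
      (by simp only [hq₁, tendsto_const_nhds])

end Shooting

theorem mul_sSup_image_le_sInf_image {α : Type*} {f : α → ℝ} {c : ℝ} {s t : Set α} (hc : 0 ≤ c)
    (hs : s.Nonempty) (ht : t.Nonempty) (h : ∀ x ∈ s, ∀ y ∈ t, c * f x ≤ f y) :
    c * sSup (f '' s) ≤ sInf (f '' t) := by
  rw [← smul_eq_mul, ← Real.sSup_smul_of_nonneg hc]
  refine csSup_le (hs.image f).smul_set (forall_mem_image.2 (forall_mem_image.2 fun x hx ↦ ?_))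
  exact le_csInf (ht.image f) (forall_mem_image.2 (h x hx))

theorem sub_mul_le_sub_mul_of_concaveOn_left {f : ℝ → ℝ} {a b s t : ℝ}
    (hf : ConcaveOn ℝ (Icc a b) f) (ha : 0 ≤ f a) (hs : s ∈ Icc a b) (ht : t ∈ Icc a s) :
    (t - a) * f s ≤ (s - a) * f t := by
  rcases (ht.1.trans ht.2).eq_or_lt with rfl | has
  · simp [le_antisymm ht.2 ht.1]
  have has' : 0 < s - a := sub_pos.2 has
  have hchord := hf.2 ⟨le_rfl, hs.1.trans hs.2⟩ hs (div_nonneg (sub_nonneg.2 ht.2) has'.le)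
    (div_nonneg (sub_nonneg.2 ht.1) has'.le) (by field_simp; ring)
  have hpoint : (s - t) / (s - a) * a + (t - a) / (s - a) * s = t := by field_simp; ring
  simp only [smul_eq_mul, hpoint] at hchord
  have hdrop : 0 ≤ (s - t) / (s - a) * f a :=
    mul_nonneg (div_nonneg (sub_nonneg.2 ht.2) has'.le) ha
  rw [← div_le_iff₀' has', mul_div_right_comm]
  linarith

theorem sub_mul_le_sub_mul_of_concaveOn_right {f : ℝ → ℝ} {a b s t : ℝ}
    (hf : ConcaveOn ℝ (Icc a b) f) (hb : 0 ≤ f b) (hs : s ∈ Icc a b) (ht : t ∈ Icc s b) :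
    (b - t) * f s ≤ (b - s) * f t := by
  have hneg : ConcaveOn ℝ (Icc (-b) (-a)) fun x ↦ f (-x) := by
    rw [← neg_Icc]
    exact hf.comp_linearMap (-LinearMap.id)
  have := sub_mul_le_sub_mul_of_concaveOn_left hneg (by simpa using hb)
    (s := -s) (t := -t) ⟨neg_le_neg hs.2, neg_le_neg hs.1⟩ ⟨neg_le_neg ht.2, neg_le_neg ht.1⟩
  simpa [add_comm, ← sub_eq_add_neg] using this

theorem min_mul_le_of_concaveOn {f : ℝ → ℝ} {s t : ℝ} (hf : ConcaveOn ℝ (Icc 0 1) f)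
    (hf₀ : ∀ x ∈ Icc (0 : ℝ) 1, 0 ≤ f x) (hs : s ∈ Icc (0 : ℝ) 1) (ht : t ∈ Icc (0 : ℝ) 1) :
    min t (1 - t) * f s ≤ f t := by
  have hfs := hf₀ s hs
  have hft := hf₀ t ht
  rcases le_total t s with hts | hst
  · calc min t (1 - t) * f s ≤ (t - 0) * f s := by gcongr; simp
      _ ≤ (s - 0) * f t := sub_mul_le_sub_mul_of_concaveOn_left hf (hf₀ 0 (by simp)) hs ⟨ht.1, hts⟩
      _ ≤ f t := mul_le_of_le_one_left hft (by linarith [hs.2])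
  · calc min t (1 - t) * f s ≤ (1 - t) * f s := by gcongr; simp
      _ ≤ (1 - s) * f t := sub_mul_le_sub_mul_of_concaveOn_right hf (hf₀ 1 (by simp)) hs ⟨hst, ht.2⟩
      _ ≤ f t := mul_le_of_le_one_left hft (by linarith [hs.1])

/-- `-u'' = γ` on `[0, 1]`, written as the first-order system `u' = p`, `p' = -γ` with one-sided
derivatives at the end points. -/
structure IsPoissonSolution (u p γ : ℝ → ℝ) : Prop where
  hasDerivWithinAt : ∀ t ∈ Icc (0 : ℝ) 1, HasDerivWithinAt u (p t) (Icc 0 1) t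
  hasDerivWithinAt_deriv : ∀ t ∈ Icc (0 : ℝ) 1, HasDerivWithinAt p (-γ t) (Icc 0 1) t

theorem isPoissonSolution_parabola (a b : ℝ) :
    IsPoissonSolution (fun t ↦ b * t - a / 2 * t ^ 2) (fun t ↦ b - a * t) fun _ ↦ a where
  hasDerivWithinAt t _ := by
    have := ((hasDerivAt_id t).const_mul b).sub ((hasDerivAt_pow 2 t).const_mul (a / 2))
    exact (this.congr_deriv (by push_cast; ring)).hasDerivWithinAt
  hasDerivWithinAt_deriv t _ := by
    simpa using (((hasDerivAt_id t).const_mul a).const_sub b).hasDerivWithinAt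

namespace IsPoissonSolution

variable {u p γ u' p' γ' : ℝ → ℝ} {K t : ℝ}

theorem sub (h : IsPoissonSolution u p γ) (h' : IsPoissonSolution u' p' γ') :
    IsPoissonSolution (u - u') (p - p') (γ - γ') where
  hasDerivWithinAt t ht := (h.1 t ht).sub (h'.1 t ht)
  hasDerivWithinAt_deriv t ht :=
    ((h.2 t ht).sub (h'.2 t ht)).congr_deriv (by simp only [Pi.sub_apply]; ring)

theorem congr (h : IsPoissonSolution u p γ) (hγ : EqOn γ γ' (Icc 0 1)) :
    IsPoissonSolution u p γ' where
  hasDerivWithinAt := h.1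
  hasDerivWithinAt_deriv t ht := hγ ht ▸ h.2 t ht

theorem continuousOn (h : IsPoissonSolution u p γ) : ContinuousOn u (Icc 0 1) :=
  HasDerivWithinAt.continuousOn h.hasDerivWithinAt

theorem continuousOn_deriv (h : IsPoissonSolution u p γ) : ContinuousOn p (Icc 0 1) :=
  HasDerivWithinAt.continuousOn h.hasDerivWithinAt_deriv

theorem antitoneOn_deriv (h : IsPoissonSolution u p γ) (hγ : ∀ t ∈ Icc (0 : ℝ) 1, 0 ≤ γ t) :
    AntitoneOn p (Icc 0 1) :=
  antitoneOn_of_hasDerivWithinAt_nonpos (convex_Icc 0 1) h.continuousOn_deriv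
    (fun t ht ↦ (h.hasDerivWithinAt_deriv t (interior_subset ht)).mono interior_subset)
    fun t ht ↦ neg_nonpos.2 (hγ t (interior_subset ht))

theorem concaveOn (h : IsPoissonSolution u p γ) (hγ : ∀ t ∈ Icc (0 : ℝ) 1, 0 ≤ γ t) :
    ConcaveOn ℝ (Icc 0 1) u :=
  concaveOn_of_hasDerivWithinAt2_nonpos (convex_Icc 0 1) h.continuousOn
    (fun t ht ↦ (h.hasDerivWithinAt t (interior_subset ht)).mono interior_subset)
    (fun t ht ↦ (h.hasDerivWithinAt_deriv t (interior_subset ht)).mono interior_subset)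
    fun t ht ↦ neg_nonpos.2 (hγ t (interior_subset ht))

theorem nonneg_of_dirichlet (h : IsPoissonSolution u p γ) (hγ : ∀ t ∈ Icc (0 : ℝ) 1, 0 ≤ γ t)
    (h₀ : 0 ≤ u 0) (h₁ : 0 ≤ u 1) (ht : t ∈ Icc (0 : ℝ) 1) : 0 ≤ u t :=
  (le_min h₀ h₁).trans ((h.concaveOn hγ).min_le_of_mem_Icc (by simp) (by simp) ht)

theorem le_of_dirichlet (h : IsPoissonSolution u p γ) (hγ : ∀ t ∈ Icc (0 : ℝ) 1, γ t ≤ K)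
    (h₀ : u 0 ≤ 0) (h₁ : u 1 ≤ 0) (ht : t ∈ Icc (0 : ℝ) 1) : u t ≤ K / 2 * t - K / 2 * t ^ 2 :=
  sub_nonneg.1 (((isPoissonSolution_parabola K (K / 2)).sub h).nonneg_of_dirichlet
    (fun s hs ↦ sub_nonneg.2 (hγ s hs)) (by simpa using h₀) (by simpa using h₁) ht)

theorem monotoneOn_of_mixed (h : IsPoissonSolution u p γ) (hγ : ∀ t ∈ Icc (0 : ℝ) 1, 0 ≤ γ t)
    (h₁ : 0 ≤ p 1) : MonotoneOn u (Icc 0 1) :=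
  monotoneOn_of_hasDerivWithinAt_nonneg (convex_Icc 0 1) h.continuousOn
    (fun t ht ↦ (h.hasDerivWithinAt t (interior_subset ht)).mono interior_subset)
    fun t ht ↦
      have htI : t ∈ Icc (0 : ℝ) 1 := interior_subset ht
      h₁.trans (h.antitoneOn_deriv hγ htI (by simp) htI.2)

theorem nonneg_of_mixed (h : IsPoissonSolution u p γ) (hγ : ∀ t ∈ Icc (0 : ℝ) 1, 0 ≤ γ t)
    (h₀ : 0 ≤ u 0) (h₁ : 0 ≤ p 1) (ht : t ∈ Icc (0 : ℝ) 1) : 0 ≤ u t :=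
  h₀.trans (h.monotoneOn_of_mixed hγ h₁ (by simp) ht ht.1)

theorem le_of_mixed (h : IsPoissonSolution u p γ) (hγ : ∀ t ∈ Icc (0 : ℝ) 1, γ t ≤ K)
    (h₀ : u 0 ≤ 0) (h₁ : p 1 ≤ 0) (ht : t ∈ Icc (0 : ℝ) 1) : u t ≤ K * t - K / 2 * t ^ 2 :=
  sub_nonneg.1 (((isPoissonSolution_parabola K K).sub h).nonneg_of_mixed
    (fun s hs ↦ sub_nonneg.2 (hγ s hs)) (by simpa using h₀) (by simpa using h₁) ht)

theorem mul_le_of_mixed (h : IsPoissonSolution u p γ) (hγ : ∀ t ∈ Icc (0 : ℝ) 1, 0 ≤ γ t)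
    (h₀ : 0 ≤ u 0) (h₁ : 0 ≤ p 1) {s : ℝ} (hs : s ∈ Icc (0 : ℝ) 1) (ht : t ∈ Icc (0 : ℝ) 1) :
    t * u s ≤ u t := by
  have hut := h.nonneg_of_mixed hγ h₀ h₁ ht
  rcases le_total t s with hts | hst
  · have := sub_mul_le_sub_mul_of_concaveOn_left (h.concaveOn hγ) h₀ hs ⟨ht.1, hts⟩
    rw [sub_zero, sub_zero] at this
    exact this.trans (mul_le_of_le_one_left hut hs.2)
  · exact (mul_le_of_le_one_left (h.nonneg_of_mixed hγ h₀ h₁ hs) ht.2).trans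
      (h.monotoneOn_of_mixed hγ h₁ hs ht hst)

theorem mul_sSup_le_sInf_of_dirichlet (h : IsPoissonSolution u p γ)
    (hγ : ∀ t ∈ Icc (0 : ℝ) 1, 0 ≤ γ t) (h₀ : 0 ≤ u 0) (h₁ : 0 ≤ u 1) {a b : ℝ} (ha : 0 ≤ a)
    (hab : a ≤ b) (hb : b ≤ 1) :
    min a (1 - b) * sSup (u '' Icc 0 1) ≤ sInf (u '' Icc a b) := by
  refine mul_sSup_image_le_sInf_image (le_min ha (sub_nonneg.2 hb)) (nonempty_Icc.2 zero_le_one)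
    (nonempty_Icc.2 hab) fun s hs t ht ↦ ?_
  have hnonneg : ∀ r ∈ Icc (0 : ℝ) 1, 0 ≤ u r := fun r ↦ h.nonneg_of_dirichlet hγ h₀ h₁
  calc min a (1 - b) * u s ≤ min t (1 - t) * u s :=
        mul_le_mul_of_nonneg_right (min_le_min ht.1 (sub_le_sub_left ht.2 1)) (hnonneg s hs)
    _ ≤ u t := min_mul_le_of_concaveOn (h.concaveOn hγ) hnonneg hs ⟨ha.trans ht.1, ht.2.trans hb⟩

theorem mul_sSup_le_sInf_of_mixed (h : IsPoissonSolution u p γ)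
    (hγ : ∀ t ∈ Icc (0 : ℝ) 1, 0 ≤ γ t) (h₀ : 0 ≤ u 0) (h₁ : 0 ≤ p 1) {a b : ℝ} (ha : 0 ≤ a)
    (hab : a ≤ b) (hb : b ≤ 1) : a * sSup (u '' Icc 0 1) ≤ sInf (u '' Icc a b) :=
  mul_sSup_image_le_sInf_image ha (nonempty_Icc.2 zero_le_one) (nonempty_Icc.2 hab) fun _ hs _ ht ↦
    (mul_le_mul_of_nonneg_right ht.1 (h.nonneg_of_mixed hγ h₀ h₁ hs)).trans
      (h.mul_le_of_mixed hγ h₀ h₁ hs ⟨ha.trans ht.1, ht.2.trans hb⟩)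

theorem contDiffOn (h : IsPoissonSolution u p γ) (hγ : ContinuousOn γ (Icc 0 1)) :
    ContDiffOn ℝ 2 u (Icc 0 1) := by
  have hI : UniqueDiffOn ℝ (Icc (0 : ℝ) 1) := uniqueDiffOn_Icc zero_lt_one
  have hp : ContDiffOn ℝ 1 p (Icc 0 1) := (contDiffOn_one_iff_derivWithin hI).2
    ⟨fun t ht ↦ (h.2 t ht).differentiableWithinAt,
      hγ.neg.congr fun t ht ↦ (h.2 t ht).derivWithin (hI t ht)⟩
  rw [show (2 : WithTop ℕ∞) = 1 + 1 by norm_num, contDiffOn_succ_iff_derivWithin hI]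
  exact ⟨fun t ht ↦ (h.1 t ht).differentiableWithinAt, by simp,
    hp.congr fun t ht ↦ (h.1 t ht).derivWithin (hI t ht)⟩

theorem deriv_eq (h : IsPoissonSolution u p γ) (ht : t ∈ Ioo (0 : ℝ) 1) : deriv u t = p t :=
  ((h.1 t (Ioo_subset_Icc_self ht)).hasDerivAt (Icc_mem_nhds ht.1 ht.2)).deriv

theorem deriv_deriv_eq (h : IsPoissonSolution u p γ) (ht : t ∈ Ioo (0 : ℝ) 1) :
    deriv (deriv u) t = -γ t := by
  have heq : deriv u =ᶠ[𝓝 t] p := by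
    filter_upwards [Ioo_mem_nhds ht.1 ht.2] with s hs using h.deriv_eq hs
  rw [heq.deriv_eq]
  exact ((h.2 t (Ioo_subset_Icc_self ht)).hasDerivAt (Icc_mem_nhds ht.1 ht.2)).deriv

theorem hasDerivWithinAt_Iic_one (h : IsPoissonSolution u p γ) :
    HasDerivWithinAt u (p 1) (Iic 1) 1 :=
  (h.1 1 (by simp)).mono_of_mem_nhdsWithin (Icc_mem_nhdsLE zero_lt_one)

theorem deriv_eqOn_zero (h : IsPoissonSolution u p γ) (hu : EqOn u 0 (Icc 0 1)) :
    EqOn p 0 (Icc 0 1) := fun t ht ↦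
  (uniqueDiffOn_Icc zero_lt_one t ht).eq_deriv _ (h.1 t ht)
    ((hasDerivWithinAt_const t _ 0).congr hu (hu ht))

theorem source_eqOn_zero (h : IsPoissonSolution u p γ) (hu : EqOn u 0 (Icc 0 1)) :
    EqOn γ 0 (Icc 0 1) := fun t ht ↦
  neg_eq_zero.1 ((uniqueDiffOn_Icc zero_lt_one t ht).eq_deriv _ (h.2 t ht)
    ((hasDerivWithinAt_const t _ 0).congr (h.deriv_eqOn_zero hu) (h.deriv_eqOn_zero hu ht)))

end IsPoissonSolution

section System

variable {ρ₁ ρ₂ : ℝ}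

/-- The points `(t, w₁, w₂, z₁, z₂)` at which the system is evaluated along solutions `(u, v)` with
`0 ≤ u ≤ ρ₁` and `0 ≤ v ≤ ρ₂`. -/
def stateBox (ρ₁ ρ₂ : ℝ) : Set (ℝ × ℝ × ℝ × ℝ × ℝ) :=
  Icc 0 1 ×ˢ Icc 0 ρ₁ ×ˢ Icc 0 ρ₂ ×ˢ Ici 0 ×ˢ Ici 0

/-- The map of `(t, u, v, u', v')` into `stateBox ρ₁ ρ₂` which clamps the first three coordinates
and takes the absolute values of the slopes. -/
def truncate (ρ₁ ρ₂ : ℝ) (x : ℝ × ℝ × ℝ × ℝ × ℝ) : ℝ × ℝ × ℝ × ℝ × ℝ :=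
  (max 0 (min 1 x.1), max 0 (min ρ₁ x.2.1), max 0 (min ρ₂ x.2.2.1), |x.2.2.2.1|, |x.2.2.2.2|)

theorem continuous_truncate (ρ₁ ρ₂ : ℝ) : Continuous (truncate ρ₁ ρ₂) := by
  unfold truncate
  fun_prop

theorem truncate_mem_stateBox (hρ₁ : 0 ≤ ρ₁) (hρ₂ : 0 ≤ ρ₂) (x : ℝ × ℝ × ℝ × ℝ × ℝ) :
    truncate ρ₁ ρ₂ x ∈ stateBox ρ₁ ρ₂ := by
  simp [truncate, stateBox, hρ₁, hρ₂]

theorem truncate_eq {t u v p q : ℝ} (ht : t ∈ Icc 0 1) (hu : u ∈ Icc 0 ρ₁) (hv : v ∈ Icc 0 ρ₂) :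
    truncate ρ₁ ρ₂ (t, u, v, p, q) = (t, u, v, |p|, |q|) := by
  simp only [truncate, min_eq_right ht.2, max_eq_right ht.1, min_eq_right hu.2, max_eq_right hu.1,
    min_eq_right hv.2, max_eq_right hv.1]

theorem exists_isPoissonSolution_pair {G₁ G₂ : ℝ × ℝ × ℝ × ℝ × ℝ → ℝ} (hρ₁ : 0 ≤ ρ₁) (hρ₂ : 0 ≤ ρ₂)
    (hG₁ : ContinuousOn G₁ (stateBox ρ₁ ρ₂)) (hG₂ : ContinuousOn G₂ (stateBox ρ₁ ρ₂))
    (hK₁ : MapsTo G₁ (stateBox ρ₁ ρ₂) (Icc 0 (8 * ρ₁)))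
    (hK₂ : MapsTo G₂ (stateBox ρ₁ ρ₂) (Icc 0 (2 * ρ₂))) :
    ∃ u v p q : ℝ → ℝ, IsPoissonSolution u p (fun t ↦ G₁ (t, u t, v t, |p t|, |q t|)) ∧
      IsPoissonSolution v q (fun t ↦ G₂ (t, u t, v t, |p t|, |q t|)) ∧
      (u 0 = 0 ∧ u 1 = 0 ∧ v 0 = 0 ∧ q 1 = 0) ∧
      MapsTo (fun t ↦ (t, u t, v t, |p t|, |q t|)) (Icc 0 1) (stateBox ρ₁ ρ₂) := by
  have htrunc := truncate_mem_stateBox hρ₁ hρ₂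
  obtain ⟨y, hy, hu₀, hv₀, hu₁, hq₁⟩ := exists_isIntegralCurveOn_phaseField_bvp
    (hG₁.comp_continuous (continuous_truncate ρ₁ ρ₂) htrunc)
    (hG₂.comp_continuous (continuous_truncate ρ₁ ρ₂) htrunc)
    (fun x ↦ hK₁ (htrunc x)) (fun x ↦ hK₂ (htrunc x))
  have hu : IsPoissonSolution (fun t ↦ (y t).1) (fun t ↦ (y t).2.2.1)
      (fun t ↦ G₁ (truncate ρ₁ ρ₂ (t, y t))) :=
    ⟨fun t ht ↦ (hy t ht).fst, fun t ht ↦ (hy t ht).snd.snd.fst⟩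
  have hv : IsPoissonSolution (fun t ↦ (y t).2.1) (fun t ↦ (y t).2.2.2)
      (fun t ↦ G₂ (truncate ρ₁ ρ₂ (t, y t))) :=
    ⟨fun t ht ↦ (hy t ht).snd.fst, fun t ht ↦ (hy t ht).snd.snd.snd⟩
  have hu_mem : ∀ t ∈ Icc (0 : ℝ) 1, (y t).1 ∈ Icc 0 ρ₁ := fun t ht ↦
    ⟨hu.nonneg_of_dirichlet (fun _ _ ↦ (hK₁ (htrunc _)).1) hu₀.ge hu₁.ge ht,
      (hu.le_of_dirichlet (fun _ _ ↦ (hK₁ (htrunc _)).2) hu₀.le hu₁.le ht).trans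
        (by linarith [mul_nonneg hρ₁ (sq_nonneg (2 * t - 1))])⟩
  have hv_mem : ∀ t ∈ Icc (0 : ℝ) 1, (y t).2.1 ∈ Icc 0 ρ₂ := fun t ht ↦
    ⟨hv.nonneg_of_mixed (fun _ _ ↦ (hK₂ (htrunc _)).1) hv₀.ge hq₁.ge ht,
      (hv.le_of_mixed (fun _ _ ↦ (hK₂ (htrunc _)).2) hv₀.le hq₁.le ht).trans
        (by linarith [mul_nonneg hρ₂ (sq_nonneg (t - 1))])⟩
  have heq : ∀ t ∈ Icc (0 : ℝ) 1, truncate ρ₁ ρ₂ (t, y t) =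
      (t, (y t).1, (y t).2.1, |(y t).2.2.1|, |(y t).2.2.2|) := fun t ht ↦
    truncate_eq ht (hu_mem t ht) (hv_mem t ht)
  exact ⟨_, _, _, _, hu.congr fun t ht ↦ congrArg G₁ (heq t ht),
    hv.congr fun t ht ↦ congrArg G₂ (heq t ht), ⟨hu₀, hu₁, hv₀, hq₁⟩,
    fun t ht ↦ ⟨ht, hu_mem t ht, hv_mem t ht, mem_Ici.2 (abs_nonneg _), mem_Ici.2 (abs_nonneg _)⟩⟩

theorem IsPoissonSolution.isPosSol {a₁ b₁ a₂ b₂ : ℝ} {g₁ g₂ : ℝ → ℝ → ℝ → ℝ → ℝ → ℝ}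
    {u v p q : ℝ → ℝ} (ha₁ : 0 ≤ a₁) (hab₁ : a₁ ≤ b₁) (hb₁ : b₁ ≤ 1) (ha₂ : 0 ≤ a₂) (hab₂ : a₂ ≤ b₂)
    (hb₂ : b₂ ≤ 1) (hu : IsPoissonSolution u p fun t ↦ g₁ t (u t) (v t) |p t| |q t|)
    (hv : IsPoissonSolution v q fun t ↦ g₂ t (u t) (v t) |p t| |q t|)
    (hbdry : u 0 = 0 ∧ u 1 = 0 ∧ v 0 = 0 ∧ q 1 = 0)
    (hg₁ : ContinuousOn (fun t ↦ g₁ t (u t) (v t) |p t| |q t|) (Icc 0 1))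
    (hg₂ : ContinuousOn (fun t ↦ g₂ t (u t) (v t) |p t| |q t|) (Icc 0 1))
    (hg₁_nonneg : ∀ t ∈ Icc (0 : ℝ) 1, 0 ≤ g₁ t (u t) (v t) |p t| |q t|)
    (hg₂_nonneg : ∀ t ∈ Icc (0 : ℝ) 1, 0 ≤ g₂ t (u t) (v t) |p t| |q t|)
    (hne : ∃ t ∈ Icc (0 : ℝ) 1, g₁ t 0 0 0 0 ≠ 0 ∨ g₂ t 0 0 0 0 ≠ 0) :
    IsPosSol a₁ b₁ a₂ b₂ (min a₁ (1 - b₁)) a₂ g₁ g₂ u v := by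
  obtain ⟨hu₀, hu₁, hv₀, hq₁⟩ := hbdry
  have hnontrivial :
      ¬((∀ t ∈ Icc (0 : ℝ) 1, u t = 0) ∧ ∀ t ∈ Icc (0 : ℝ) 1, v t = 0) := by
    rintro ⟨hu_zero, hv_zero⟩
    obtain ⟨t, ht, hgt⟩ := hne
    have hpt : p t = 0 := hu.deriv_eqOn_zero hu_zero ht
    have hqt : q t = 0 := hv.deriv_eqOn_zero hv_zero ht
    have hg₁t := hu.source_eqOn_zero hu_zero ht
    have hg₂t := hv.source_eqOn_zero hv_zero ht
    simp only [hu_zero t ht, hv_zero t ht, hpt, hqt, abs_zero, Pi.zero_apply] at hg₁t hg₂t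
    exact hgt.elim (· hg₁t) (· hg₂t)
  refine ⟨fun t ↦ hu.nonneg_of_dirichlet hg₁_nonneg hu₀.ge hu₁.ge,
    fun t ↦ hv.nonneg_of_mixed hg₂_nonneg hv₀.ge hq₁.ge, hu.continuousOn, hv.continuousOn,
    (hu.contDiffOn hg₁).mono Ioo_subset_Icc_self, (hv.contDiffOn hg₂).mono Ioo_subset_Icc_self,
    hnontrivial, fun t ht ↦ ?_, fun t ht ↦ ?_, hu₀, hu₁, hv₀, hq₁ ▸ hv.hasDerivWithinAt_Iic_one,
    hu.mul_sSup_le_sInf_of_dirichlet hg₁_nonneg hu₀.ge hu₁.ge ha₁ hab₁ hb₁,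
    hv.mul_sSup_le_sInf_of_mixed hg₂_nonneg hv₀.ge hq₁.ge ha₂ hab₂ hb₂⟩
  · rw [hu.deriv_deriv_eq ht, neg_neg, hu.deriv_eq ht, hv.deriv_eq ht]
  · rw [hv.deriv_deriv_eq ht, neg_neg, hu.deriv_eq ht, hv.deriv_eq ht]

end System

theorem stmt0_general {a₁ b₁ a₂ b₂ ρ₁ ρ₂ : ℝ} (ha₁ : 0 ≤ a₁) (hab₁ : a₁ ≤ b₁) (hb₁ : b₁ ≤ 1)
    (ha₂ : 0 ≤ a₂) (hab₂ : a₂ ≤ b₂) (hb₂ : b₂ ≤ 1) (hρ₁ : 0 ≤ ρ₁) (hρ₂ : 0 ≤ ρ₂)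
    {g₁ g₂ : ℝ → ℝ → ℝ → ℝ → ℝ → ℝ}
    (hg₁ : ContinuousOn (fun x : ℝ × ℝ × ℝ × ℝ × ℝ ↦ g₁ x.1 x.2.1 x.2.2.1 x.2.2.2.1 x.2.2.2.2)
      (stateBox ρ₁ ρ₂))
    (hg₂ : ContinuousOn (fun x : ℝ × ℝ × ℝ × ℝ × ℝ ↦ g₂ x.1 x.2.1 x.2.2.1 x.2.2.2.1 x.2.2.2.2)
      (stateBox ρ₁ ρ₂))
    (hK₁ : ∀ x ∈ stateBox ρ₁ ρ₂, g₁ x.1 x.2.1 x.2.2.1 x.2.2.2.1 x.2.2.2.2 ∈ Icc 0 (8 * ρ₁))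
    (hK₂ : ∀ x ∈ stateBox ρ₁ ρ₂, g₂ x.1 x.2.1 x.2.2.1 x.2.2.2.1 x.2.2.2.2 ∈ Icc 0 (2 * ρ₂))
    (hne : ∃ t ∈ Icc (0 : ℝ) 1, g₁ t 0 0 0 0 ≠ 0 ∨ g₂ t 0 0 0 0 ≠ 0) :
    ∃ u v : ℝ → ℝ, IsPosSol a₁ b₁ a₂ b₂ (min a₁ (1 - b₁)) a₂ g₁ g₂ u v := by
  obtain ⟨u, v, p, q, hu, hv, hbdry, hbox⟩ :=
    exists_isPoissonSolution_pair hρ₁ hρ₂ hg₁ hg₂ hK₁ hK₂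
  have hpath : ContinuousOn (fun t ↦ (t, u t, v t, |p t|, |q t|)) (Icc 0 1) :=
    continuousOn_id.prodMk (hu.continuousOn.prodMk (hv.continuousOn.prodMk
      (hu.continuousOn_deriv.abs.prodMk hv.continuousOn_deriv.abs)))
  exact ⟨u, v, hu.isPosSol ha₁ hab₁ hb₁ ha₂ hab₂ hb₂ hv hbdry (hg₁.comp hpath hbox)
    (hg₂.comp hpath hbox) (fun t ht ↦ (hK₁ _ (hbox ht)).1) (fun t ht ↦ (hK₂ _ (hbox ht)).1) hne⟩

/-- Existence theorem: with `[a₁,b₁] ⊂ (0,1)`, `[a₂,b₂] ⊂ (0,1]`,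
`c₁ = min{a₁,1−b₁}`, `c₂ = a₂`, `m₁ = 8`, `m₂ = 2`,
`M₁ = 2/(a₁(b₁−a₁)(2−a₁−b₁))` if `a₁+b₁ ≤ 1`, `M₁ = 2/((1−b₁)(b₁²−a₁²))` if
`a₁+b₁ > 1`, `M₂ = 1/(a₂(b₂−a₂))`, `g₁, g₂` positive and continuous, suppose
there are `ρᵢ, sᵢ > 0` with `ρᵢ < cᵢ·sᵢ` such that `gᵢ < mᵢρᵢ` on
`[0,1]×[0,ρ₁]×[0,ρ₂]×[0,∞)²`, `g₁ > M₁s₁` on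
`[a₁,b₁]×[s₁,s₁/c₁]×[0,s₂/c₂]×[0,∞)²` and `g₂ > M₂s₂` on
`[a₂,b₂]×[0,s₁/c₁]×[s₂,s₂/c₂]×[0,∞)²`.  Then the system has at least one
positive solution. -/
theorem stmt0 (a₁ b₁ a₂ b₂ : ℝ)
    (ha₁ : 0 < a₁) (hab₁ : a₁ < b₁) (hb₁ : b₁ < 1)
    (ha₂ : 0 < a₂) (hab₂ : a₂ < b₂) (hb₂ : b₂ ≤ 1)
    (c₁ c₂ m₁ m₂ M₁ M₂ : ℝ)
    (hc₁ : c₁ = min a₁ (1 - b₁)) (hc₂ : c₂ = a₂)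
    (hm₁ : m₁ = 8) (hm₂ : m₂ = 2)
    (hM₁ : M₁ = if a₁ + b₁ ≤ 1 then 2 / (a₁ * (b₁ - a₁) * (2 - a₁ - b₁))
      else 2 / ((1 - b₁) * (b₁ ^ 2 - a₁ ^ 2)))
    (hM₂ : M₂ = 1 / (a₂ * (b₂ - a₂)))
    (g₁ g₂ : ℝ → ℝ → ℝ → ℝ → ℝ → ℝ)
    (hg₁cont : ContinuousOn
      (fun q : ℝ × ℝ × ℝ × ℝ × ℝ => g₁ q.1 q.2.1 q.2.2.1 q.2.2.2.1 q.2.2.2.2)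
      (Set.Icc (0:ℝ) 1 ×ˢ Set.Ici (0:ℝ) ×ˢ Set.Ici (0:ℝ) ×ˢ Set.Ici (0:ℝ) ×ˢ Set.Ici (0:ℝ)))
    (hg₂cont : ContinuousOn
      (fun q : ℝ × ℝ × ℝ × ℝ × ℝ => g₂ q.1 q.2.1 q.2.2.1 q.2.2.2.1 q.2.2.2.2)
      (Set.Icc (0:ℝ) 1 ×ˢ Set.Ici (0:ℝ) ×ˢ Set.Ici (0:ℝ) ×ˢ Set.Ici (0:ℝ) ×ˢ Set.Ici (0:ℝ)))
    (hg₁pos : ∀ t ∈ Set.Icc (0:ℝ) 1, ∀ w₁ ∈ Set.Ici (0:ℝ), ∀ w₂ ∈ Set.Ici (0:ℝ),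
      ∀ z₁ ∈ Set.Ici (0:ℝ), ∀ z₂ ∈ Set.Ici (0:ℝ), 0 < g₁ t w₁ w₂ z₁ z₂)
    (hg₂pos : ∀ t ∈ Set.Icc (0:ℝ) 1, ∀ w₁ ∈ Set.Ici (0:ℝ), ∀ w₂ ∈ Set.Ici (0:ℝ),
      ∀ z₁ ∈ Set.Ici (0:ℝ), ∀ z₂ ∈ Set.Ici (0:ℝ), 0 < g₂ t w₁ w₂ z₁ z₂)
    (ρ₁ ρ₂ s₁ s₂ : ℝ)
    (hρ₁ : 0 < ρ₁) (hρ₂ : 0 < ρ₂) (hs₁ : 0 < s₁) (hs₂ : 0 < s₂)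
    (hρs₁ : ρ₁ < c₁ * s₁) (hρs₂ : ρ₂ < c₂ * s₂)
    (hsup₁ : ∀ t ∈ Set.Icc (0:ℝ) 1, ∀ w₁ ∈ Set.Icc (0:ℝ) ρ₁, ∀ w₂ ∈ Set.Icc (0:ℝ) ρ₂,
      ∀ z₁ ∈ Set.Ici (0:ℝ), ∀ z₂ ∈ Set.Ici (0:ℝ), g₁ t w₁ w₂ z₁ z₂ < m₁ * ρ₁)
    (hsup₂ : ∀ t ∈ Set.Icc (0:ℝ) 1, ∀ w₁ ∈ Set.Icc (0:ℝ) ρ₁, ∀ w₂ ∈ Set.Icc (0:ℝ) ρ₂,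
      ∀ z₁ ∈ Set.Ici (0:ℝ), ∀ z₂ ∈ Set.Ici (0:ℝ), g₂ t w₁ w₂ z₁ z₂ < m₂ * ρ₂)
    (hinf₁ : ∀ t ∈ Set.Icc a₁ b₁, ∀ w₁ ∈ Set.Icc s₁ (s₁ / c₁),
      ∀ w₂ ∈ Set.Icc (0:ℝ) (s₂ / c₂), ∀ z₁ ∈ Set.Ici (0:ℝ), ∀ z₂ ∈ Set.Ici (0:ℝ),
      M₁ * s₁ < g₁ t w₁ w₂ z₁ z₂)
    (hinf₂ : ∀ t ∈ Set.Icc a₂ b₂, ∀ w₁ ∈ Set.Icc (0:ℝ) (s₁ / c₁),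
      ∀ w₂ ∈ Set.Icc s₂ (s₂ / c₂), ∀ z₁ ∈ Set.Ici (0:ℝ), ∀ z₂ ∈ Set.Ici (0:ℝ),
      M₂ * s₂ < g₂ t w₁ w₂ z₁ z₂) :
    ∃ u v : ℝ → ℝ, IsPosSol a₁ b₁ a₂ b₂ c₁ c₂ g₁ g₂ u v := by
  subst hc₁ hc₂ hm₁ hm₂
  have hsub : stateBox ρ₁ ρ₂ ⊆ Icc 0 1 ×ˢ Ici 0 ×ˢ Ici 0 ×ˢ Ici 0 ×ˢ Ici 0 :=
    prod_mono le_rfl (prod_mono Icc_subset_Ici_self (prod_mono Icc_subset_Ici_self le_rfl))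
  exact stmt0_general ha₁.le hab₁.le hb₁.le ha₂.le hab₂.le hb₂ hρ₁.le hρ₂.le
    (hg₁cont.mono hsub) (hg₂cont.mono hsub)
    (fun _ ⟨ht, hw₁, hw₂, hz₁, hz₂⟩ ↦ ⟨(hg₁pos _ ht _ hw₁.1 _ hw₂.1 _ hz₁ _ hz₂).le,
      (hsup₁ _ ht _ hw₁ _ hw₂ _ hz₁ _ hz₂).le⟩)
    (fun _ ⟨ht, hw₁, hw₂, hz₁, hz₂⟩ ↦ ⟨(hg₂pos _ ht _ hw₁.1 _ hw₂.1 _ hz₁ _ hz₂).le,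
      (hsup₂ _ ht _ hw₁ _ hw₂ _ hz₁ _ hz₂).le⟩)
    ⟨0, by simp, .inl (hg₁pos 0 (by simp) 0 self_mem_Ici 0 self_mem_Ici 0 self_mem_Ici 0
      self_mem_Ici).ne'⟩
end

section
/- Suppose that g₁(t,w₁,w₂,z₁,z₂) < 8·w₁ whenever w₁ > 0 and g₂(t,w₁,w₂,z₁,z₂) < 2·w₂ whenever w₂ > 0 (for all t ∈ [0,1], w₁,w₂ ≥ 0, z₁,z₂ ≥ 0). If u,v : [0,1] → [0,∞) are continuous functions satisfying u(t) = ∫₀¹ k₁(t,s)·g₁(s,u(s),v(s),|u'(s)|,|v'(s)|) ds and v(t) = ∫₀¹ k₂(t,s)·g₂(s,u(s),v(s),|u'(s)|,|v'(s)|) ds for all t ∈ [0,1] (with u,v continuously differentiable on (0,1)), then u ≡ 0 and v ≡ 0. -/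
/-- Green's function for the Dirichlet problem on `[0,1]`. -/
noncomputable def k1 (t s : ℝ) : ℝ := if s ≤ t then s * (1 - t) else t * (1 - s)

/-- Green's function for the Robin problem on `[0,1]` (`k₂(t,s) = min{s,t}`). -/
noncomputable def k2 (t s : ℝ) : ℝ := if s ≤ t then s else t

/-!
At a maximum point `t` of `u`, suppose `u t > 0`. The nonlinearity is below `8 * u t` everywhere:
where `u > 0` by hypothesis, and where `u = 0` because the hypothesis passes to the limit `w₁ → 0`.
Integrating against the nonnegative kernel `k1 t`, whose mass is at most `1 / 8`, gives `u t ≤ u t`,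
and equality would force `k1 t = 0` almost everywhere, hence `u t = 0`. The equation for `v` is
treated in the same way.
-/

open Set MeasureTheory

section Hammerstein

variable {X : Type*} [MeasurableSpace X] {μ : Measure X}

theorem integral_mul_lt_of_lt_of_mul_integral_le {k G : X → ℝ} {c M : ℝ} (hM : 0 < M)
    (hk : Integrable k μ) (hkG : Integrable (fun s ↦ k s * G s) μ) (hk_nonneg : 0 ≤ᵐ[μ] k)
    (hG : ∀ᵐ s ∂μ, G s < c) (hle : c * ∫ s, k s ∂μ ≤ M) :
    ∫ s, k s * G s ∂μ < M := by
  by_contra! hge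
  have hgap_nonneg : 0 ≤ᵐ[μ] fun s ↦ c * k s - k s * G s := by
    filter_upwards [hk_nonneg, hG] with s hks hGs
    have := mul_le_mul_of_nonneg_left hGs.le hks
    exact sub_nonneg.2 (by linarith)
  have hgap_integral : ∫ s, (c * k s - k s * G s) ∂μ = 0 := by
    refine le_antisymm ?_ (integral_nonneg_of_ae hgap_nonneg)
    rw [integral_sub (hk.const_mul c) hkG, integral_const_mul]
    linarith
  have hgap : (fun s ↦ c * k s - k s * G s) =ᵐ[μ] 0 :=
    (integral_eq_zero_iff_of_nonneg_ae hgap_nonneg ((hk.const_mul c).sub hkG)).1 hgap_integral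
  have hkG_zero : (fun s ↦ k s * G s) =ᵐ[μ] 0 := by
    filter_upwards [hgap, hG] with s hs hGs
    have hprod : k s * (c - G s) = 0 := by
      simp only [Pi.zero_apply] at hs
      linear_combination hs
    have hks : k s = 0 := (mul_eq_zero.1 hprod).resolve_right (sub_pos.2 hGs).ne'
    exact mul_eq_zero_of_left hks _
  exact hM.not_ge (hge.trans_eq (integral_eq_zero_of_ae hkG_zero))

/-- Kernels `k` of the Hammerstein operators `u ↦ ∫ s in K, k · s * f s (u s) ∂μ` considered here:
nonnegative, with `∫ s in K, k t s ∂μ ≤ m⁻¹` for `t ∈ K`. Thus `m` is a lower bound for the constant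
`(sup_t ∫ s in K, k t s ∂μ)⁻¹`, rather than that constant itself. -/
structure IsHammersteinKernel (k : X → X → ℝ) (K : Set X) (μ : Measure X) (m : ℝ) : Prop where
  nonneg : ∀ t ∈ K, ∀ s ∈ K, 0 ≤ k t s
  integrableOn : ∀ t ∈ K, IntegrableOn (k t) K μ
  setIntegral_le_inv : ∀ t ∈ K, ∫ s in K, k t s ∂μ ≤ m⁻¹

/- A coupled system is covered one equation at a time: the other unknowns and all derivatives are
frozen into the dependence of `f` on its first argument, which may be arbitrary. -/
theorem stmt2_general [TopologicalSpace X] {K : Set X} (hK : IsCompact K)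
    (hK_meas : MeasurableSet K) {k : X → X → ℝ} {m : ℝ} (hm : 0 < m)
    (hk : IsHammersteinKernel k K μ m) {f : X → ℝ → ℝ}
    (hf_cont : ∀ s ∈ K, ContinuousWithinAt (f s) (Ici 0) 0)
    (hf_lt : ∀ s ∈ K, ∀ w, 0 < w → f s w < m * w) {u : X → ℝ}
    (hu_nonneg : ∀ t ∈ K, 0 ≤ u t) (hu_usc : UpperSemicontinuousOn u K)
    (hu_eq : ∀ t ∈ K, u t = ∫ s in K, k t s * f s (u s) ∂μ) :
    ∀ t ∈ K, u t = 0 := by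
  intro t₀ ht₀
  obtain ⟨t, ht, hmax⟩ := hu_usc.exists_isMaxOn ⟨t₀, ht₀⟩ hK
  suffices h : u t ≤ 0 from le_antisymm ((hmax ht₀).trans h) (hu_nonneg t₀ ht₀)
  by_contra! hpos
  have hf_zero (s : X) (hs : s ∈ K) : f s 0 ≤ m * 0 :=
    ((hf_cont s hs).mono Ioi_subset_Ici_self).closure_le (by simp only [closure_Ioi, self_mem_Ici])
      (by fun_prop) fun w hw ↦ (hf_lt s hs w hw).le
  have hf_lt_max (s : X) (hs : s ∈ K) : f s (u s) < m * u t := by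
    rcases (hu_nonneg s hs).eq_or_lt with hus | hus
    · rw [← hus]
      exact (hf_zero s hs).trans_lt (mul_lt_mul_of_pos_left hpos hm)
    · exact (hf_lt s hs _ hus).trans_le (mul_le_mul_of_nonneg_left (hmax hs) hm.le)
  have hint : IntegrableOn (fun s ↦ k t s * f s (u s)) K μ :=
    .of_integral_ne_zero (hu_eq t ht ▸ hpos.ne')
  have hmass : m * u t * ∫ s in K, k t s ∂μ ≤ u t :=
    calc m * u t * ∫ s in K, k t s ∂μ
      _ ≤ m * u t * m⁻¹ := by gcongr; exact hk.setIntegral_le_inv t ht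
      _ = u t := by field_simp
  exact (hu_eq t ht).not_gt <| integral_mul_lt_of_lt_of_mul_integral_le hpos
    (hk.integrableOn t ht) hint (ae_restrict_of_forall_mem hK_meas (hk.nonneg t ht))
    (ae_restrict_of_forall_mem hK_meas hf_lt_max) hmass

end Hammerstein

theorem intervalIntegral_eq_setIntegral_Icc {E : Type*} [NormedAddCommGroup E] [NormedSpace ℝ E]
    {μ : Measure ℝ} [NullSingletonClass μ] {a b : ℝ} (hab : a ≤ b) (f : ℝ → E) :
    ∫ s in a..b, f s ∂μ = ∫ s in Icc a b, f s ∂μ := by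
  rw [intervalIntegral.integral_of_le hab, integral_Icc_eq_integral_Ioc]

theorem intervalIntegral_ite_le {E : Type*} [NormedAddCommGroup E] [NormedSpace ℝ E]
    {μ : Measure ℝ} {a b t : ℝ} (ht : t ∈ Icc a b) {f g : ℝ → E}
    (hf : IntervalIntegrable f μ a t) (hg : IntervalIntegrable g μ t b) :
    ∫ s in a..b, (if s ≤ t then f s else g s) ∂μ = (∫ s in a..t, f s ∂μ) + ∫ s in t..b, g s ∂μ := by
  have hleft : EqOn f (fun s ↦ if s ≤ t then f s else g s) (uIoc a t) := fun s hs ↦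
    (if_pos (uIoc_of_le ht.1 ▸ hs).2).symm
  have hright : EqOn g (fun s ↦ if s ≤ t then f s else g s) (uIoc t b) := fun s hs ↦
    (if_neg (uIoc_of_le ht.2 ▸ hs).1.not_ge).symm
  rw [← intervalIntegral.integral_add_adjacent_intervals (hf.congr hleft) (hg.congr hright),
    intervalIntegral.integral_congr_ae (.of_forall fun s hs ↦ hleft hs),
    intervalIntegral.integral_congr_ae (.of_forall fun s hs ↦ hright hs)]

theorem k1_eq_min_mul_one_sub_max (t s : ℝ) : k1 t s = min t s * (1 - max t s) := by
  rcases le_total s t with h | h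
  · simp only [k1, if_pos h, min_eq_right h, max_eq_left h]
  · rw [min_eq_left h, max_eq_right h, k1, ite_eq_right_iff]
    intro h'
    rw [le_antisymm h' h]

theorem k2_eq_min (t s : ℝ) : k2 t s = min t s := by
  rw [k2, min_comm, min_def]

theorem continuous_k1 (t : ℝ) : Continuous (k1 t) := by
  simp only [funext (k1_eq_min_mul_one_sub_max t)]
  fun_prop

theorem continuous_k2 (t : ℝ) : Continuous (k2 t) := by
  simp only [funext (k2_eq_min t)]
  fun_prop

theorem integral_k1 {t : ℝ} (ht : t ∈ Icc (0 : ℝ) 1) :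
    ∫ s in (0 : ℝ)..1, k1 t s = t * (1 - t) / 2 := by
  simp only [k1]
  rw [intervalIntegral_ite_le ht (Continuous.intervalIntegrable (by fun_prop) _ _)
      (Continuous.intervalIntegrable (by fun_prop) _ _),
    intervalIntegral.integral_mul_const, intervalIntegral.integral_const_mul,
    intervalIntegral.integral_sub (by simp) (by simp)]
  simp only [integral_id, intervalIntegral.integral_const, smul_eq_mul]
  ring

theorem integral_k2 {t : ℝ} (ht : t ∈ Icc (0 : ℝ) 1) :
    ∫ s in (0 : ℝ)..1, k2 t s = t * (2 - t) / 2 := by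
  simp only [k2]
  rw [intervalIntegral_ite_le ht (Continuous.intervalIntegrable (by fun_prop) _ _)
      (Continuous.intervalIntegrable (by fun_prop) _ _)]
  simp only [integral_id, intervalIntegral.integral_const, smul_eq_mul]
  ring

theorem isHammersteinKernel_k1 : IsHammersteinKernel k1 (Icc 0 1) volume 8 where
  nonneg t ht s hs := by
    rw [k1_eq_min_mul_one_sub_max]
    exact mul_nonneg (le_min ht.1 hs.1) (sub_nonneg.2 (max_le ht.2 hs.2))
  integrableOn t _ := (continuous_k1 t).integrableOn_Icc
  setIntegral_le_inv t ht := by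
    rw [← intervalIntegral_eq_setIntegral_Icc zero_le_one, integral_k1 ht]
    linarith [sq_nonneg (t - 1 / 2)]

theorem isHammersteinKernel_k2 : IsHammersteinKernel k2 (Icc 0 1) volume 2 where
  nonneg t ht s hs := by
    rw [k2_eq_min]
    exact le_min ht.1 hs.1
  integrableOn t _ := (continuous_k2 t).integrableOn_Icc
  setIntegral_le_inv t ht := by
    rw [← intervalIntegral_eq_setIntegral_Icc zero_le_one, integral_k2 ht]
    linarith [sq_nonneg (t - 1)]

/-- Non-existence: if `g₁ < 8·w₁` whenever `w₁ > 0` and `g₂ < 2·w₂` whenever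
`w₂ > 0`, then the only nonnegative solution of the system of Hammerstein
integral equations `u = ∫ k₁·g₁`, `v = ∫ k₂·g₂` is the zero one. -/
theorem stmt2 (g₁ g₂ : ℝ → ℝ → ℝ → ℝ → ℝ → ℝ)
    (hg₁cont : ContinuousOn
      (fun q : ℝ × ℝ × ℝ × ℝ × ℝ => g₁ q.1 q.2.1 q.2.2.1 q.2.2.2.1 q.2.2.2.2)
      (Set.Icc (0:ℝ) 1 ×ˢ Set.Ici (0:ℝ) ×ˢ Set.Ici (0:ℝ) ×ˢ Set.Ici (0:ℝ) ×ˢ Set.Ici (0:ℝ)))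
    (hg₂cont : ContinuousOn
      (fun q : ℝ × ℝ × ℝ × ℝ × ℝ => g₂ q.1 q.2.1 q.2.2.1 q.2.2.2.1 q.2.2.2.2)
      (Set.Icc (0:ℝ) 1 ×ˢ Set.Ici (0:ℝ) ×ˢ Set.Ici (0:ℝ) ×ˢ Set.Ici (0:ℝ) ×ˢ Set.Ici (0:ℝ)))
    (hg₁nn : ∀ t ∈ Set.Icc (0:ℝ) 1, ∀ w₁ ∈ Set.Ici (0:ℝ), ∀ w₂ ∈ Set.Ici (0:ℝ),
      ∀ z₁ ∈ Set.Ici (0:ℝ), ∀ z₂ ∈ Set.Ici (0:ℝ), 0 ≤ g₁ t w₁ w₂ z₁ z₂)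
    (hg₂nn : ∀ t ∈ Set.Icc (0:ℝ) 1, ∀ w₁ ∈ Set.Ici (0:ℝ), ∀ w₂ ∈ Set.Ici (0:ℝ),
      ∀ z₁ ∈ Set.Ici (0:ℝ), ∀ z₂ ∈ Set.Ici (0:ℝ), 0 ≤ g₂ t w₁ w₂ z₁ z₂)
    (hg₁ : ∀ t ∈ Set.Icc (0:ℝ) 1, ∀ w₁ ∈ Set.Ici (0:ℝ), ∀ w₂ ∈ Set.Ici (0:ℝ),
      ∀ z₁ ∈ Set.Ici (0:ℝ), ∀ z₂ ∈ Set.Ici (0:ℝ),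
      0 < w₁ → g₁ t w₁ w₂ z₁ z₂ < 8 * w₁)
    (hg₂ : ∀ t ∈ Set.Icc (0:ℝ) 1, ∀ w₁ ∈ Set.Ici (0:ℝ), ∀ w₂ ∈ Set.Ici (0:ℝ),
      ∀ z₁ ∈ Set.Ici (0:ℝ), ∀ z₂ ∈ Set.Ici (0:ℝ),
      0 < w₂ → g₂ t w₁ w₂ z₁ z₂ < 2 * w₂)
    (u v : ℝ → ℝ)
    (hu0 : ∀ t ∈ Set.Icc (0:ℝ) 1, 0 ≤ u t) (hv0 : ∀ t ∈ Set.Icc (0:ℝ) 1, 0 ≤ v t)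
    (hucont : ContinuousOn u (Set.Icc 0 1)) (hvcont : ContinuousOn v (Set.Icc 0 1))
    (huC1 : ContDiffOn ℝ 1 u (Set.Ioo 0 1)) (hvC1 : ContDiffOn ℝ 1 v (Set.Ioo 0 1))
    (hueq : ∀ t ∈ Set.Icc (0:ℝ) 1,
      u t = ∫ s in (0:ℝ)..1, k1 t s * g₁ s (u s) (v s) |deriv u s| |deriv v s|)
    (hveq : ∀ t ∈ Set.Icc (0:ℝ) 1,
      v t = ∫ s in (0:ℝ)..1, k2 t s * g₂ s (u s) (v s) |deriv u s| |deriv v s|) :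
    (∀ t ∈ Set.Icc (0:ℝ) 1, u t = 0) ∧ (∀ t ∈ Set.Icc (0:ℝ) 1, v t = 0) := by
  have habs (x : ℝ) : |x| ∈ Ici (0 : ℝ) := abs_nonneg x
  simp only [intervalIntegral_eq_setIntegral_Icc zero_le_one] at hueq hveq
  constructor
  · refine stmt2_general isCompact_Icc measurableSet_Icc (by norm_num) isHammersteinKernel_k1
      (f := fun s w ↦ g₁ s w (v s) |deriv u s| |deriv v s|) (fun s hs ↦ ?_)
      (fun s hs w hw ↦ hg₁ s hs w hw.le _ (hv0 s hs) _ (habs _) _ (habs _) hw)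
      hu0 hucont.upperSemicontinuousOn hueq
    exact hg₁cont.comp (f := fun w ↦ (s, w, v s, |deriv u s|, |deriv v s|)) (by fun_prop)
      (fun w hw ↦ ⟨hs, hw, hv0 s hs, habs _, habs _⟩) 0 self_mem_Ici
  · refine stmt2_general isCompact_Icc measurableSet_Icc (by norm_num) isHammersteinKernel_k2
      (f := fun s w ↦ g₂ s (u s) w |deriv u s| |deriv v s|) (fun s hs ↦ ?_)
      (fun s hs w hw ↦ hg₂ s hs _ (hu0 s hs) w hw.le _ (habs _) _ (habs _) hw)
      hv0 hvcont.upperSemicontinuousOn hveq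
    exact hg₂cont.comp (f := fun w ↦ (s, u s, w, |deriv u s|, |deriv v s|)) (by fun_prop)
      (fun w hw ↦ ⟨hs, hu0 s hs, hw, habs _, habs _⟩) 0 self_mem_Ici
end
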